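/- Let q be an odd prime, ℓ an odd prime with ℓ | q − 1, and let e₁, ..., e_{ℓ−1} ∈ F_q be the primitive ℓ-th roots of unity. The number of matrices σ ∈ GL₂(F_q) having at least one eigenvalue among {e₁,...,e_{ℓ−1}} equals (ℓ−1)·(q³ − (ℓ/2 − 1)q² − (ℓ/2 + 1)q), i.e., equals ((ℓ−1)(q−ℓ) + binom(ℓ−1, 2))·(q+1)q + (ℓ−1) + (ℓ−1)(q+1)(q−1). -/

import Mathlib

/-!
Let `q = |F|`. Sort the matrices in `GL₂(F)` with a nonzero eigenvalue `e` by the second eigenvalue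
`f = trace - e`. There are `q ^ 2` matrices with eigenvalues `e, f` when `e = f` and `q * (q + 1)`
otherwise: the diagonal entry `a` is free, and the off-diagonal entries have the prescribed product
`-(a - e) * (a - f)`. Enlarging a set `S` of nonzero scalars by `e` therefore adds exactly the
matrices whose second eigenvalue avoids `S` and `0`, and induction on `S` gives the count.
-/

open Finset Polynomial

lemma card_filter_units_val_of_isUnit {M : Type*} [Monoid M] [Fintype M] [Fintype Mˣ]
    {p : M → Prop} [DecidablePred p] (hp : ∀ m, p m → IsUnit m) :
    #{u : Mˣ | p u} = #{m : M | p m} := by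
  refine card_nbij Units.val (fun u hu => by simpa using hu) Units.val_injective.injOn ?_
  intro m hm
  have hpm : p m := by simpa using hm
  obtain ⟨u, rfl⟩ := hp m hpm
  exact ⟨u, by simpa using hpm, rfl⟩

lemma card_filter_trace_eq_and_det_eq {R : Type*} [CommRing R] [Fintype R] [DecidableEq R]
    (t d : R) :
    #{M : Matrix (Fin 2) (Fin 2) R | M.trace = t ∧ M.det = d} =
      ∑ a : R, #{p : R × R | p.1 * p.2 = a * (t - a) - d} := by
  rw [← card_sigma]
  refine card_nbij' (fun M => ⟨M 0 0, M 0 1, M 1 0⟩)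
    (fun s => !![s.1, s.2.1; s.2.2, t - s.1]) ?_ ?_ ?_ ?_
  · intro M hM
    simp only [coe_filter_univ, Set.mem_ofPred_eq, Matrix.trace_fin_two, Matrix.det_fin_two] at hM
    simp only [coe_sigma, Set.mem_sigma_iff, coe_univ, Set.mem_univ, true_and, coe_filter_univ,
      Set.mem_ofPred_eq]
    linear_combination M 0 0 * hM.1 - hM.2
  · intro s hs
    simp only [coe_sigma, Set.mem_sigma_iff, coe_univ, Set.mem_univ, true_and, coe_filter_univ,
      Set.mem_ofPred_eq] at hs
    simp [Matrix.trace_fin_two, Matrix.det_fin_two, hs]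
  · intro M hM
    simp only [coe_filter_univ, Set.mem_ofPred_eq, Matrix.trace_fin_two] at hM
    simpa [← hM.1] using M.eta_fin_two.symm
  · intro s _
    simp

section CharpolyFinTwo

variable {R : Type*} [CommRing R] {M : Matrix (Fin 2) (Fin 2) R} {e : R}

lemma isRoot_charpoly_fin_two_iff [Nontrivial R] :
    M.charpoly.IsRoot e ↔ M.det = e * (M.trace - e) := by
  simp only [IsRoot.def, Matrix.charpoly_fin_two, eval_add, eval_sub, eval_mul, eval_pow, eval_X,
    eval_C]
  constructor <;> intro h <;> linear_combination h

lemma isRoot_charpoly_and_trace_sub_eq_iff [Nontrivial R] {f : R} :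
    M.charpoly.IsRoot e ∧ M.trace - e = f ↔ M.trace = e + f ∧ M.det = e * f := by
  rw [isRoot_charpoly_fin_two_iff, sub_eq_iff_eq_add', and_comm]
  refine and_congr_right fun trace_eq => ?_
  rw [trace_eq, add_sub_cancel_left]

lemma isRoot_charpoly_fin_two_iff_eq_or_eq [IsDomain R] {x : R} (he : M.charpoly.IsRoot e) :
    M.charpoly.IsRoot x ↔ x = e ∨ x = M.trace - e := by
  rw [isRoot_charpoly_fin_two_iff] at he ⊢
  rw [he, ← sub_eq_zero (a := x), ← sub_eq_zero (a := x), ← mul_eq_zero]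
  constructor <;> intro h <;> linear_combination h

lemma forall_mem_not_isRoot_charpoly_iff [IsDomain R] {S : Finset R}
    (he : M.charpoly.IsRoot e) (heS : e ∉ S) :
    (∀ x ∈ S, ¬ M.charpoly.IsRoot x) ↔ M.trace - e ∉ S := by
  simp only [isRoot_charpoly_fin_two_iff_eq_or_eq he]
  grind

lemma trace_sub_ne_zero_of_isRoot_charpoly [Nontrivial R] (hM : IsUnit M)
    (he : M.charpoly.IsRoot e) : M.trace - e ≠ 0 := by
  intro trace_sub_eq_zero
  have det_eq_zero : M.det = 0 := by
    rw [isRoot_charpoly_fin_two_iff.mp he, trace_sub_eq_zero, mul_zero]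
  exact ((Matrix.isUnit_iff_isUnit_det M).mp hM).ne_zero det_eq_zero

end CharpolyFinTwo

lemma pos_of_dvd_card_sub_one {α : Type*} [Fintype α] [Nontrivial α] {n : ℕ}
    (hn : n ∣ Fintype.card α - 1) : 0 < n :=
  Nat.pos_of_dvd_of_pos hn (Nat.sub_pos_of_lt Fintype.one_lt_card)

section FiniteField

variable {F : Type*} [Field F] [Fintype F] [DecidableEq F]

lemma card_filter_mul_left_eq {b : F} (hb : b ≠ 0) (k : F) : #{c : F | b * c = k} = 1 := by
  rw [card_eq_one]
  refine ⟨k / b, ?_⟩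
  ext c
  simp [eq_div_iff hb, mul_comm]

lemma card_filter_fst_mul_snd_eq (k : F) :
    #{p : F × F | p.1 * p.2 = k} =
      Fintype.card F - 1 + if k = 0 then Fintype.card F else 0 := by
  have sum_fibers : #{p : F × F | p.1 * p.2 = k} = ∑ b : F, #{c : F | b * c = k} := by
    simp only [card_filter, Fintype.sum_prod_type]
  have zero_fiber : #{c : F | 0 * c = k} = if k = 0 then Fintype.card F else 0 := by
    split_ifs with hk
    · simp [hk]
    · simp [Ne.symm hk]
  rw [sum_fibers, ← sum_erase_add _ _ (mem_univ 0), zero_fiber,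
    sum_congr rfl fun b hb => card_filter_mul_left_eq (ne_of_mem_erase hb) k]
  simp

lemma card_filter_trace_eq_add_and_det_eq_mul (e f : F) :
    #{M : Matrix (Fin 2) (Fin 2) F | M.trace = e + f ∧ M.det = e * f} =
      if f = e then Fintype.card F ^ 2 else Fintype.card F * (Fintype.card F + 1) := by
  have roots : ({a | a * (e + f - a) - e * f = 0} : Finset F) = {e, f} := by
    ext a
    have factor : a * (e + f - a) - e * f = -((a - e) * (a - f)) := by ring
    rw [mem_filter_univ, factor, neg_eq_zero, mul_eq_zero, sub_eq_zero, sub_eq_zero, mem_insert,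
      mem_singleton]
  have one_le_card : 1 ≤ Fintype.card F := Fintype.card_pos
  simp only [card_filter_trace_eq_and_det_eq, card_filter_fst_mul_snd_eq, sum_add_distrib,
    ← sum_filter, roots, sum_const, smul_eq_mul, card_univ]
  split_ifs with h
  · rw [h, pair_eq_singleton, card_singleton]
    zify [one_le_card]
    ring
  · rw [card_pair (Ne.symm h)]
    zify [one_le_card]
    ring

lemma card_filter_GL_trace_eq_add_and_det_eq_mul {e f : F} (he : e ≠ 0) (hf : f ≠ 0) :
    #{σ : GL (Fin 2) F | σ.val.trace = e + f ∧ σ.val.det = e * f} =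
      if f = e then Fintype.card F ^ 2 else Fintype.card F * (Fintype.card F + 1) := by
  rw [← card_filter_trace_eq_add_and_det_eq_mul]
  refine card_filter_units_val_of_isUnit
    (p := fun M : Matrix (Fin 2) (Fin 2) F => M.trace = e + f ∧ M.det = e * f) fun M hM => ?_
  rw [Matrix.isUnit_iff_isUnit_det, hM.2]
  exact (mul_ne_zero he hf).isUnit

lemma card_filter_GL_isRoot_and_trace_sub_mem {e : F} {T : Finset F} (he : e ∈ T) (h0 : 0 ∉ T) :
    #{σ : GL (Fin 2) F | σ.val.charpoly.IsRoot e ∧ σ.val.trace - e ∈ T} =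
      Fintype.card F ^ 2 + (#T - 1) * (Fintype.card F * (Fintype.card F + 1)) := by
  have ne_zero {f : F} (hf : f ∈ T) : f ≠ 0 := ne_of_mem_of_not_mem hf h0
  have card_fiber (f : F) (hf : f ∈ T) :
      #{σ : GL (Fin 2) F | (σ.val.charpoly.IsRoot e ∧ σ.val.trace - e ∈ T) ∧
        σ.val.trace - e = f} =
      if f = e then Fintype.card F ^ 2 else Fintype.card F * (Fintype.card F + 1) := by
    rw [← card_filter_GL_trace_eq_add_and_det_eq_mul (ne_zero he) (ne_zero hf)]
    simp only [← isRoot_charpoly_and_trace_sub_eq_iff]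
    refine congrArg card (filter_congr fun σ _ => ?_)
    exact and_congr_left fun h => and_iff_left (h ▸ hf)
  rw [card_eq_sum_card_fiberwise (f := fun σ : GL (Fin 2) F => σ.val.trace - e) (t := T)
    fun σ hσ => ((mem_filter_univ σ).mp hσ).2]
  simp only [filter_filter]
  rw [sum_congr rfl card_fiber, ← add_sum_erase _ _ he, if_pos rfl,
    sum_congr rfl fun f hf => if_neg (ne_of_mem_erase hf), sum_const, card_erase_of_mem he,
    smul_eq_mul]

lemma card_filter_GL_isRoot_and_forall_not_isRoot {S : Finset F} {e : F} (h0 : 0 ∉ S)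
    (he0 : e ≠ 0) (heS : e ∉ S) :
    (#{σ : GL (Fin 2) F | σ.val.charpoly.IsRoot e ∧ ∀ x ∈ S, ¬ σ.val.charpoly.IsRoot x} : ℤ) =
      Fintype.card F ^ 2 +
        (Fintype.card F - 2 - #S) * (Fintype.card F * (Fintype.card F + 1)) := by
  have he : e ∈ (insert 0 S)ᶜ := by simp [he0, heS]
  have card_compl_pos : 1 ≤ #(insert 0 S)ᶜ := card_pos.mpr ⟨e, he⟩
  have card_compl_add : #(insert 0 S)ᶜ + (#S + 1) = Fintype.card F := by
    rw [← card_insert_of_notMem h0, card_compl_add_card]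
  have second_root_iff (σ : GL (Fin 2) F) :
      (σ.val.charpoly.IsRoot e ∧ ∀ x ∈ S, ¬ σ.val.charpoly.IsRoot x) ↔
        σ.val.charpoly.IsRoot e ∧ σ.val.trace - e ∈ (insert 0 S)ᶜ := by
    refine and_congr_right fun root => ?_
    rw [forall_mem_not_isRoot_charpoly_iff root heS, mem_compl, mem_insert,
      or_iff_right (trace_sub_ne_zero_of_isRoot_charpoly σ.isUnit root)]
  simp only [second_root_iff]
  rw [card_filter_GL_isRoot_and_trace_sub_mem he (by simp)]
  zify [card_compl_pos] at card_compl_add ⊢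
  rw [← card_compl_add]
  ring

lemma card_filter_GL_exists_mem_isRoot {S : Finset F} (h0 : 0 ∉ S) :
    (#{σ : GL (Fin 2) F | ∃ e ∈ S, σ.val.charpoly.IsRoot e} : ℤ) =
      (#S * (Fintype.card F - 1 - #S) + (#S).choose 2) * ((Fintype.card F + 1) * Fintype.card F) +
        #S * Fintype.card F ^ 2 := by
  induction S using Finset.induction_on with
  | empty => simp
  | insert e S heS ih =>
    obtain ⟨he0, h0⟩ : 0 ≠ e ∧ 0 ∉ S := by simpa using h0
    have split : #{σ : GL (Fin 2) F | ∃ x ∈ insert e S, σ.val.charpoly.IsRoot x} =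
        #{σ : GL (Fin 2) F | ∃ x ∈ S, σ.val.charpoly.IsRoot x} +
        #{σ : GL (Fin 2) F | σ.val.charpoly.IsRoot e ∧ ∀ x ∈ S, ¬ σ.val.charpoly.IsRoot x} := by
      rw [← card_union_of_disjoint, ← filter_or]
      · refine congrArg card (filter_congr fun σ _ => ?_)
        grind
      · rw [disjoint_filter]
        grind
    rw [split, Nat.cast_add, ih h0, card_filter_GL_isRoot_and_forall_not_isRoot h0 he0.symm heS,
      card_insert_of_notMem heS, Nat.choose_succ_succ' (#S) 1, Nat.choose_one_right]
    push_cast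
    ring

lemma card_filter_pow_eq_one_and_ne_one {n : ℕ} (hn : n ∣ Fintype.card F - 1) :
    #{e : F | e ^ n = 1 ∧ e ≠ 1} = n - 1 := by
  have card_roots : #{e : F | e ^ n = 1} = n := by
    calc
      #{e : F | e ^ n = 1} = #{u : Fˣ | (u : F) ^ n = 1} :=
        (card_filter_units_val_of_isUnit (p := fun e : F => e ^ n = 1)
          fun _ h => IsUnit.of_pow_eq_one h (pos_of_dvd_card_sub_one hn).ne').symm
      _ = Nat.card (powMonoidHom n : Fˣ →* Fˣ).ker := by
        simp [← Fintype.card_subtype, ← Nat.card_eq_fintype_card, MonoidHom.mem_ker, Units.ext_iff]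
      _ = n := by
        rw [IsCyclic.card_powMonoidHom_ker, Nat.card_units, Nat.card_eq_fintype_card,
          Nat.gcd_eq_right hn]
  rw [filter_and_not, filter_eq', if_pos (mem_univ _), sdiff_singleton_eq_erase,
    card_erase_of_mem (by simp), card_roots]

end FiniteField

theorem stmt14_general {F : Type*} [Field F] [Fintype F] [DecidableEq F] {ℓ : ℕ}
    (hdvd : ℓ ∣ Fintype.card F - 1) :
    (#{σ : GL (Fin 2) F | ∃ e : F, e ^ ℓ = 1 ∧ e ≠ 1 ∧
        e ^ 2 - σ.val.trace * e + σ.val.det = 0} : ℤ) =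
      ((ℓ - 1) * (Fintype.card F - ℓ) + (ℓ - 1).choose 2) *
          ((Fintype.card F + 1) * Fintype.card F) +
        (ℓ - 1) + (ℓ - 1) * ((Fintype.card F + 1) * (Fintype.card F - 1)) := by
  have one_le_ℓ : 1 ≤ ℓ := pos_of_dvd_card_sub_one hdvd
  have zero_notMem : (0 : F) ∉ ({e | e ^ ℓ = 1 ∧ e ≠ 1} : Finset F) := by
    simp [Nat.ne_of_gt one_le_ℓ]
  have count := card_filter_GL_exists_mem_isRoot zero_notMem
  rw [card_filter_pow_eq_one_and_ne_one hdvd] at count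
  simp only [mem_filter_univ, and_assoc, IsRoot.def, Matrix.charpoly_fin_two, eval_add, eval_sub,
    eval_mul, eval_pow, eval_X, eval_C] at count
  rw [count]
  push_cast [one_le_ℓ]
  ring

theorem stmt14 (q ℓ : ℕ) [Fact q.Prime] (hqodd : Odd q) (hℓ : ℓ.Prime) (hℓodd : Odd ℓ)
    (hdvd : ℓ ∣ q - 1) :
    ((Finset.univ.filter
      (fun σ : GL (Fin 2) (ZMod q) =>
        ∃ e : ZMod q, e ^ ℓ = 1 ∧ e ≠ 1 ∧
          e ^ 2 - Matrix.trace (σ : Matrix (Fin 2) (Fin 2) (ZMod q)) * e +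
            Matrix.det (σ : Matrix (Fin 2) (Fin 2) (ZMod q)) = 0)).card : ℤ) =
      (((ℓ : ℤ) - 1) * ((q : ℤ) - (ℓ : ℤ)) + ((ℓ - 1).choose 2 : ℤ)) * (((q : ℤ) + 1) * (q : ℤ))
        + ((ℓ : ℤ) - 1) + ((ℓ : ℤ) - 1) * (((q : ℤ) + 1) * ((q : ℤ) - 1)) := by
  simpa only [ZMod.card] using stmt14_general (F := ZMod q) (by rwa [ZMod.card])
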